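/- Let F be a Ferrers diagram of semiperimeter n+1. The map ψ sending a recurrent configuration x ∈ Rec(G(F)) to the pair (φ_CT(minrec(x)), x − minrec(x)) is a bijection from Rec(G(F)) onto the set of pairs (T, (a_1,…,a_n)) with T ∈ EWtab(F) and 0 ≤ a_j < ν_j(T) for every j ∈ {1,…,n}. -/

import Mathlib

open Classical

/-- A Ferrers diagram of semiperimeter `n + 1`, encoded by the set of its row labels
(labels `0, …, n` run along the south-east border; `0` labels the top row and the
last label `n` is a column label). -/
structure Ferrers (n : ℕ) where
  rows : Finset (Fin (n + 1))
  zero_mem : 0 ∈ rows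
  last_not_mem : Fin.last n ∉ rows

namespace Ferrers

/-- `(i, j)` is a cell of the diagram: `i` is a row label, `j` a column label, `i < j`. -/
def Cell {n : ℕ} (F : Ferrers n) (i j : Fin (n + 1)) : Prop :=
  i ∈ F.rows ∧ j ∉ F.rows ∧ i < j

/-- Adjacency in the Ferrers graph `G(F)`. -/
def Adj {n : ℕ} (F : Ferrers n) (u v : Fin (n + 1)) : Prop :=
  F.Cell u v ∨ F.Cell v u

/-- Degree of a vertex in `G(F)`. -/
noncomputable def deg {n : ℕ} (F : Ferrers n) (v : Fin (n + 1)) : ℕ :=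
  {u | F.Adj v u}.ncard

/-- Toppling a single vertex.  The height at the sink `0` is kept equal to `c 0`
(grains sent to the sink vanish); toppling the sink sends one grain to each of
its neighbours. -/
noncomputable def topple {n : ℕ} (F : Ferrers n) (c : Fin (n + 1) → ℕ)
    (v : Fin (n + 1)) : Fin (n + 1) → ℕ :=
  fun u =>
    if u = 0 then c 0
    else if u = v then c v - F.deg v
    else if F.Adj v u then c u + 1
    else c u

/-- Toppling the vertices of a list in order. -/
noncomputable def toppleList {n : ℕ} (F : Ferrers n) (c : Fin (n + 1) → ℕ)
    (l : List (Fin (n + 1))) : Fin (n + 1) → ℕ :=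
  l.foldl F.topple c

/-- Simultaneous toppling of a set of vertices. -/
noncomputable def toppleSet {n : ℕ} (F : Ferrers n) (c : Fin (n + 1) → ℕ)
    (S : Set (Fin (n + 1))) : Fin (n + 1) → ℕ :=
  fun u =>
    if u = 0 then c 0
    else c u + {w ∈ S | F.Adj w u}.ncard - if u ∈ S then F.deg u else 0

/-- A configuration is stable if every non-sink vertex has fewer grains than its degree. -/
def Stable {n : ℕ} (F : Ferrers n) (c : Fin (n + 1) → ℕ) : Prop :=
  ∀ v, v ≠ 0 → c v < F.deg v

/-- A Dhar (burning) ordering for `c`: an ordering `v₀ = 0, v₁, …, vₙ` of all the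
vertices such that each `vᵢ` (`i ≥ 1`) is unstable after toppling `v₀, …, v_{i-1}`. -/
def DharSeq {n : ℕ} (F : Ferrers n) (c : Fin (n + 1) → ℕ) (l : List (Fin (n + 1))) : Prop :=
  l.length = n + 1 ∧ l.Nodup ∧ l.head? = some 0 ∧
    ∀ i, ∀ h : i < l.length, 1 ≤ i →
      F.deg (l.get ⟨i, h⟩) ≤ F.toppleList c (l.take i) (l.get ⟨i, h⟩)

/-- Recurrent configurations (via Dhar's criterion).  The height at the sink is
normalised to `0`. -/
def Recurrent {n : ℕ} (F : Ferrers n) (c : Fin (n + 1) → ℕ) : Prop :=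
  c 0 = 0 ∧ F.Stable c ∧ ∃ l, F.DharSeq c l

/-- Minimal recurrent configurations: recurrent with minimal total number of grains. -/
def RecMin {n : ℕ} (F : Ferrers n) (c : Fin (n + 1) → ℕ) : Prop :=
  F.Recurrent c ∧ ∀ c', F.Recurrent c' → (∑ v, c v) ≤ ∑ v, c' v

/-- Canonical toppling: block `0` is `{0}` (the sink); from then on, blocks with odd
index are the sets of currently unstable column vertices and blocks with even index
the sets of currently unstable row vertices.  The first component is the configuration
just before toppling the block recorded in the second component. -/
noncomputable def canonAux {n : ℕ} (F : Ferrers n) (c : Fin (n + 1) → ℕ) :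
    ℕ → ((Fin (n + 1) → ℕ) × Set (Fin (n + 1)))
  | 0 => (c, {0})
  | k + 1 =>
    let c' := F.toppleSet (canonAux F c k).1 (canonAux F c k).2
    (c', {v | v ≠ 0 ∧ (if k % 2 = 0 then v ∉ F.rows else v ∈ F.rows) ∧ F.deg v ≤ c' v})

/-- The `k`-th block of the canonical toppling of `c`:
`canonTop F c 0 = U⁰ = {0}`, `canonTop F c (2i-1) = Vⁱ`, `canonTop F c (2i) = Uⁱ`. -/
noncomputable def canonTop {n : ℕ} (F : Ferrers n) (c : Fin (n + 1) → ℕ) (k : ℕ) :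
    Set (Fin (n + 1)) :=
  (F.canonAux c k).2

/-- The configuration just before toppling the `k`-th block of the canonical toppling. -/
noncomputable def canonConfig {n : ℕ} (F : Ferrers n) (c : Fin (n + 1) → ℕ) (k : ℕ) :
    Fin (n + 1) → ℕ :=
  (F.canonAux c k).1

/-- The index of the block of the canonical toppling of `c` containing `v`. -/
noncomputable def bIdx {n : ℕ} (F : Ferrers n) (c : Fin (n + 1) → ℕ) (v : Fin (n + 1)) : ℕ :=
  sInf {k | v ∈ F.canonTop c k}

/-- `T` is a EW-tableau on `F` (entries of non-cells are normalised to `false`):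
the top row contains only `1`s, every other row contains a `0`, and there is no
rectangle with two diagonally opposite `0`s and two `1`s in the other corners. -/
def IsEW {n : ℕ} (F : Ferrers n) (T : Fin (n + 1) → Fin (n + 1) → Bool) : Prop :=
  (∀ i j, ¬F.Cell i j → T i j = false) ∧
  (∀ j, F.Cell 0 j → T 0 j = true) ∧
  (∀ i, i ∈ F.rows → i ≠ 0 → ∃ j, F.Cell i j ∧ T i j = false) ∧
  (∀ i i' j j', F.Cell i j → F.Cell i j' → F.Cell i' j → F.Cell i' j' →
    T i j = T i' j' → T i j' = T i' j → T i j = T i j')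

/-- The configuration associated to a tableau: row vertices count the `1`s in their
row, column vertices count the `0`s in their column (the sink is normalised to `0`). -/
noncomputable def phiTC {n : ℕ} (F : Ferrers n) (T : Fin (n + 1) → Fin (n + 1) → Bool) :
    Fin (n + 1) → ℕ :=
  fun v =>
    if v = 0 then 0
    else if v ∈ F.rows then {j | F.Cell v j ∧ T v j = true}.ncard
    else {i | F.Cell i v ∧ T i v = false}.ncard

/-- The tableau associated to a (minimal recurrent) configuration: a cell `(i, j)`
gets a `1` exactly when `i` lies in an earlier block than `j` in the canonical
toppling of `c`. -/
noncomputable def phiCT {n : ℕ} (F : Ferrers n) (c : Fin (n + 1) → ℕ) :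
    Fin (n + 1) → Fin (n + 1) → Bool :=
  fun i j => if F.Cell i j ∧ F.bIdx c i < F.bIdx c j then true else false

/-- The supplementary tableau of `T`: `S i j = 1` exactly when the row vertex `i`
lies in an earlier block than the column vertex `j` in `CanonTop (φ_TC T)`. -/
noncomputable def suppS {n : ℕ} (F : Ferrers n) (T : Fin (n + 1) → Fin (n + 1) → Bool)
    (i j : Fin (n + 1)) : Bool :=
  if F.bIdx (F.phiTC T) i < F.bIdx (F.phiTC T) j then true else false

/-- The entry of `T` in cell `(j, k)` is a cornersupport entry. -/
def Cornersupport {n : ℕ} (F : Ferrers n) (T : Fin (n + 1) → Fin (n + 1) → Bool)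
    (j k : Fin (n + 1)) : Prop :=
  ∃ j' k', j' ∈ F.rows ∧ k' ∉ F.rows ∧ j' ≠ j ∧ k' ≠ k ∧
    F.suppS T j' k' = !(T j k) ∧ F.suppS T j' k = T j k ∧ F.suppS T j k' = T j k

/-- `ν_v(T)`: the number of non-cornersupport `0`s in row `v` (if `v` is a row label),
resp. non-cornersupport `1`s in column `v` (if `v` is a column label). -/
noncomputable def nu {n : ℕ} (F : Ferrers n) (T : Fin (n + 1) → Fin (n + 1) → Bool)
    (v : Fin (n + 1)) : ℕ :=
  if v ∈ F.rows then {k | F.Cell v k ∧ T v k = false ∧ ¬F.Cornersupport T v k}.ncard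
  else {i | F.Cell i v ∧ T i v = true ∧ ¬F.Cornersupport T i v}.ncard

/-- `μ_v(c)`: if `v ∈ Uⁱ`, the number of `k ∈ Vⁱ` with `k > v`; if `v ∈ Vⁱ`,
the number of `k ∈ U^{i-1}` with `k < v`.  In both cases the relevant block is the
one immediately preceding the block of `v`. -/
noncomputable def mu {n : ℕ} (F : Ferrers n) (c : Fin (n + 1) → ℕ) (v : Fin (n + 1)) : ℕ :=
  if v ∈ F.rows then {k | v < k ∧ k ∈ F.canonTop c (F.bIdx c v - 1)}.ncard
  else {k | k < v ∧ k ∈ F.canonTop c (F.bIdx c v - 1)}.ncard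

/-- The minimal recurrent configuration with the same canonical toppling as `c`:
if `j ∈ Uⁱ` then `minrec c j = |{ℓ ∈ Vᵏ : j < ℓ, k > i}|`, and if `j ∈ Vⁱ` then
`minrec c j = |{ℓ ∈ Uᵏ : ℓ < j, k ≥ i}|` (blocks `Vᵏ` sit at odd index `2k - 1`,
blocks `Uᵏ` at even index `2k`). -/
noncomputable def minrecFun {n : ℕ} (F : Ferrers n) (c : Fin (n + 1) → ℕ) :
    Fin (n + 1) → ℕ :=
  fun j =>
    if j = 0 then 0
    else if j ∈ F.rows then
      {l | j < l ∧ ∃ k, F.bIdx c j < 2 * k + 1 ∧ l ∈ F.canonTop c (2 * k + 1)}.ncard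
    else
      {l | l < j ∧ ∃ k, F.bIdx c j < 2 * k ∧ l ∈ F.canonTop c (2 * k)}.ncard

/-- The number of edges of `G(F)` (equivalently, the number of cells of `F`). -/
noncomputable def edgeCount {n : ℕ} (F : Ferrers n) : ℕ :=
  {p : Fin (n + 1) × Fin (n + 1) | F.Cell p.1 p.2}.ncard

end Ferrers

/-!
Record a toppling by the index `b v` of the block of each vertex. Which functions `b` arise does not
depend on the configuration: every vertex but the sink has a neighbour in the preceding block, and
adjacent vertices lie in blocks of different parity. The configurations with canonical toppling `b`
form a box: `c v` is at least the number of neighbours in later blocks and exceeds it by less than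
the number of neighbours in the preceding block. Conversely a recurrent configuration has some legal
toppling, and advancing vertices as far as possible makes it canonical.

Such a `b` orients every edge from the earlier to the later block, which gives the tableau. The
rectangle condition of a EW-tableau is acyclicity of its orientation, and the blocks are recovered
as the lengths of the longest directed paths. The smallest configuration of the box is then
`φ_TC(T)`, and an entry is cornersupport exactly when the blocks of its row and column are not
consecutive, so that the side lengths of the box are the numbers `ν_j(T)`.
-/

section Layering

variable {V : Type*} {G : SimpleGraph V} {s v : V} {b c : V → ℕ} {p q r : V → Prop}

/-- The number of neighbours of `v` in `G` satisfying `p`; for `p` saying that a vertex has already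
toppled, the number of grains received by `v` so far. -/
noncomputable def neighborCount (G : SimpleGraph V) (v : V) (p : V → Prop) : ℕ :=
  {w | G.Adj v w ∧ p w}.ncard

lemma neighborCount_mono [Finite V] (h : ∀ w, G.Adj v w → p w → q w) :
    neighborCount G v p ≤ neighborCount G v q :=
  Set.ncard_le_ncard fun w hw => ⟨hw.1, h w hw.1 hw.2⟩

lemma neighborCount_congr (h : ∀ w, G.Adj v w → (p w ↔ q w)) :
    neighborCount G v p = neighborCount G v q :=
  congrArg Set.ncard <| Set.ext fun w => and_congr_right (h w)

lemma neighborCount_eq_add [Finite V] (hdisj : ∀ w, G.Adj v w → p w → ¬q w)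
    (hor : ∀ w, G.Adj v w → (r w ↔ p w ∨ q w)) :
    neighborCount G v r = neighborCount G v p + neighborCount G v q := by
  have hset : {w | G.Adj v w ∧ r w} = {w | G.Adj v w ∧ p w} ∪ {w | G.Adj v w ∧ q w} :=
    Set.ext fun w => (and_congr_right (hor w)).trans and_or_left
  rw [neighborCount, hset, Set.ncard_union_eq]
  · rfl
  · exact Set.disjoint_left.2 fun w hp hq => hdisj w hp.1 hp.2 hq.2

lemma neighborCount_pos [Finite V] : 0 < neighborCount G v p ↔ ∃ w, G.Adj v w ∧ p w :=
  Set.ncard_pos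

lemma neighborCount_eq_zero (h : ∀ w, ¬p w) : neighborCount G v p = 0 := by
  simp [neighborCount, h]

lemma neighborCount_singleton (a : V) :
    neighborCount G v (· = a) = if G.Adj v a then 1 else 0 := by
  split_ifs with ha
  · exact Set.ncard_eq_one.2 ⟨a, Set.ext fun w => ⟨And.right, fun h => ⟨h ▸ ha, h⟩⟩⟩
  · exact (neighborCount_congr fun w hw => iff_false_intro fun h : w = a => ha (h ▸ hw)).trans
      (neighborCount_eq_zero fun _ => id)

lemma neighborCount_le_ncard_neighborSet [Finite V] :
    neighborCount G v p ≤ (G.neighborSet v).ncard :=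
  Set.ncard_le_ncard fun _ hw => hw.1

lemma ncard_neighborSet_eq_add [Finite V] (h : ∀ w, G.Adj v w → (q w ↔ ¬p w)) :
    (G.neighborSet v).ncard = neighborCount G v p + neighborCount G v q := by
  rw [← neighborCount_eq_add (r := fun _ => True) (fun w hw hp hq => (h w hw).1 hq hp)
    fun w hw => by rw [h w hw]; tauto]
  simp [neighborCount, SimpleGraph.neighborSet]

/-- By parity, a lower layer that is not the preceding one is at least three steps down. -/
lemma neighborCount_lt_eq_add [Finite V] (hb : ∀ ⦃u v⦄, G.Adj u v → b u % 2 ≠ b v % 2) (v : V) :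
    neighborCount G v (b · < b v) =
      neighborCount G v (b · + 2 < b v) + neighborCount G v (b · + 1 = b v) :=
  neighborCount_eq_add (fun _ _ => by omega) fun w hw => by have := hb hw; omega

lemma ncard_neighborSet_eq_lt_add_gt [Finite V]
    (hb : ∀ ⦃u v⦄, G.Adj u v → b u % 2 ≠ b v % 2) (v : V) :
    (G.neighborSet v).ncard = neighborCount G v (b · < b v) + neighborCount G v (b v < b ·) :=
  ncard_neighborSet_eq_add fun w hw => by have := hb hw; omega

/-- A layering of `G` from the sink `s`, given by the layer `b v` of every vertex: the possible
block indices of an alternating toppling in which every vertex topples exactly once. -/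
structure IsLayering (G : SimpleGraph V) (s : V) (b : V → ℕ) : Prop where
  sink : b s = 0
  parity : ∀ ⦃u v⦄, G.Adj u v → b u % 2 ≠ b v % 2
  exists_pred : ∀ v ≠ s, ∃ u, G.Adj v u ∧ b u + 1 = b v

/-- The least heights for which every vertex `v` can topple in round `b v`; the sink carries `0`. -/
noncomputable def layerMin (G : SimpleGraph V) (s : V) (b : V → ℕ) (v : V) : ℕ :=
  if v = s then 0 else neighborCount G v (b v < b ·)

/-- Heights `c` and rounds `b` such that `v` can topple in round `b v`, after exactly the vertices
of the earlier rounds have toppled once. -/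
structure IsBurningSchedule (G : SimpleGraph V) (s : V) (c b : V → ℕ) : Prop where
  sink : b s = 0
  parity : ∀ ⦃u v⦄, G.Adj u v → b u % 2 ≠ b v % 2
  unstable : ∀ v ≠ s, (G.neighborSet v).ncard ≤ c v + neighborCount G v (b · < b v)

/-- A schedule in which every vertex topples as early as possible: two rounds before its own, the
last one of the right parity, it was still stable. -/
structure IsBurningTime (G : SimpleGraph V) (s : V) (c b : V → ℕ) : Prop
    extends IsBurningSchedule G s c b where
  stable_before : ∀ v ≠ s, c v + neighborCount G v (b · + 2 < b v) < (G.neighborSet v).ncard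

lemma color_eq_iff_ne (C : G.Coloring Bool) {u v : V} (huv : G.Adj u v) (a : Bool) :
    C u = a ↔ C v ≠ a := by
  rw [Bool.eq_not_of_ne (C.valid huv), Bool.not_eq_eq_eq_not, ← Bool.eq_not]

lemma mod_two_eq_zero_iff_color_eq (C : G.Coloring Bool) (hs : b s = 0)
    (hpred : ∀ v ≠ s, ∃ u, G.Adj v u ∧ b u + 1 = b v) (v : V) : b v % 2 = 0 ↔ C v = C s := by
  induction hm : b v using Nat.strong_induction_on generalizing v with
  | _ m ih =>
    subst hm
    by_cases hv : v = s
    · simp [hv, hs]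
    obtain ⟨u, huv, hu⟩ := hpred v hv
    rw [color_eq_iff_ne C huv, Ne, ← ih (b u) (by omega) u rfl]
    omega

namespace IsLayering

lemma pos (hb : IsLayering G s b) (hv : v ≠ s) : 0 < b v := by
  obtain ⟨u, -, hu⟩ := hb.exists_pred v hv
  omega

lemma exists_between_iff (hb : IsLayering G s b) {u : V} (huv : G.Adj u v) (hlt : b u < b v) :
    (∃ w w', b w % 2 = b v % 2 ∧ b w' % 2 = b u % 2 ∧ b u < b w ∧ b w < b w' ∧ b w' < b v) ↔
      b u + 1 ≠ b v := by
  refine ⟨fun ⟨w, w', _⟩ => by omega, fun hne => ?_⟩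
  have hpar := hb.parity huv
  have ne_sink {x} (hx : 0 < b x) : x ≠ s := by
    rintro rfl
    exact hx.ne' hb.sink
  obtain ⟨w', -, hw'⟩ := hb.exists_pred v (ne_sink (by omega))
  obtain ⟨w, -, hw⟩ := hb.exists_pred w' (ne_sink (by omega))
  exact ⟨w, w', by omega⟩

end IsLayering

lemma isBurningTime_iff [Finite V] : IsBurningTime G s c b ↔ IsLayering G s b ∧ ∀ v ≠ s,
    layerMin G s b v ≤ c v ∧ c v < layerMin G s b v + neighborCount G v (b · + 1 = b v) := by
  constructor
  · intro h
    have hrange : ∀ v ≠ s, layerMin G s b v ≤ c v ∧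
        c v < layerMin G s b v + neighborCount G v (b · + 1 = b v) := by
      intro v hv
      have hunstable := h.unstable v hv
      have hbefore := h.stable_before v hv
      have hdeg := ncard_neighborSet_eq_lt_add_gt h.parity v
      have hlt := neighborCount_lt_eq_add h.parity v
      rw [layerMin, if_neg hv]
      omega
    refine ⟨⟨h.sink, h.parity, fun v hv => neighborCount_pos.1 ?_⟩, hrange⟩
    have := hrange v hv
    omega
  · rintro ⟨hb, hrange⟩
    refine ⟨⟨hb.sink, hb.parity, fun v hv => ?_⟩, fun v hv => ?_⟩ <;>
    · have hc := hrange v hv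
      have hdeg := ncard_neighborSet_eq_lt_add_gt hb.parity v
      have hlt := neighborCount_lt_eq_add hb.parity v
      rw [layerMin, if_neg hv] at hc
      omega

lemma IsBurningTime.isLayering [Finite V] (h : IsBurningTime G s c b) : IsLayering G s b :=
  (isBurningTime_iff.1 h).1

lemma IsLayering.isBurningTime_layerMin [Finite V] (hb : IsLayering G s b) :
    IsBurningTime G s (layerMin G s b) b :=
  isBurningTime_iff.2 ⟨hb, fun v hv =>
    ⟨le_rfl, Nat.lt_add_of_pos_right (neighborCount_pos.2 (hb.exists_pred v hv))⟩⟩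

lemma IsBurningTime.lt_ncard_neighborSet [Finite V] (h : IsBurningTime G s c b) (hv : v ≠ s) :
    c v < (G.neighborSet v).ncard :=
  (Nat.le_add_right _ _).trans_lt (h.stable_before v hv)

lemma IsBurningSchedule.update_sub_two [Finite V] (h : IsBurningSchedule G s c b) (hv : v ≠ s)
    (hlt : 2 < b v)
    (hle : (G.neighborSet v).ncard ≤ c v + neighborCount G v (b · + 2 < b v)) :
    IsBurningSchedule G s c (Function.update b v (b v - 2)) := by
  set b' := Function.update b v (b v - 2) with hb'
  have hself : b' v = b v - 2 := Function.update_self ..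
  have hne : ∀ w ≠ v, b' w = b w := fun w hw => Function.update_of_ne hw ..
  have hmod : ∀ w, b' w % 2 = b w % 2 := fun w => by
    by_cases hw : w = v
    · subst hw; omega
    · rw [hne w hw]
  refine ⟨(hne s hv.symm).trans h.sink, fun x y hxy => ?_, fun w hw => ?_⟩
  · simpa only [hmod] using h.parity hxy
  by_cases hwv : w = v
  · subst hwv
    refine hle.trans (Nat.add_le_add_left (neighborCount_mono fun u hu hlt => ?_) _)
    rw [hne u hu.ne', hself]
    omega
  · refine (h.unstable w hw).trans (Nat.add_le_add_left (neighborCount_mono fun u _ hlt => ?_) _)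
    rw [hne w hwv]
    exact (update_le_self_iff.2 (Nat.sub_le _ _) u).trans_lt hlt

/-- A minimal schedule is a burning time: a vertex unstable two rounds early could be advanced. -/
lemma IsBurningSchedule.exists_isBurningTime [Finite V] (h : IsBurningSchedule G s c b)
    (hc : ∀ v ≠ s, c v < (G.neighborSet v).ncard) : ∃ b', IsBurningTime G s c b' := by
  obtain ⟨b', hb', hmin⟩ := exists_minimal_of_wellFoundedLT (IsBurningSchedule G s c) ⟨b, h⟩
  refine ⟨b', hb', fun v hv => ?_⟩
  by_contra! hle
  have hlt : 2 < b' v := by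
    by_contra! hle_two
    have := hc v hv
    rw [neighborCount_eq_zero fun w => by omega] at hle
    omega
  have hupdate : b' v ≤ Function.update b' v (b' v - 2) v :=
    hmin (hb'.update_sub_two hv hlt hle) (update_le_self_iff.2 (Nat.sub_le _ _)) v
  rw [Function.update_self] at hupdate
  omega

/-- The height of `v` before round `k` when every vertex `w` topples in round `b w`. The truncated
subtraction is exact when `b` is a burning schedule for `c`. -/
noncomputable def heightAt (G : SimpleGraph V) (c b : V → ℕ) (k : ℕ) (v : V) : ℕ :=
  c v + neighborCount G v (b · < k) - if b v < k then (G.neighborSet v).ncard else 0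

lemma IsBurningSchedule.heightAt_succ [Finite V] (h : IsBurningSchedule G s c b) (hv : v ≠ s)
    (k : ℕ) : heightAt G c b (k + 1) v = heightAt G c b k v + neighborCount G v (b · = k) -
      if b v = k then (G.neighborSet v).ncard else 0 := by
  have hsplit : neighborCount G v (b · < k + 1) =
      neighborCount G v (b · < k) + neighborCount G v (b · = k) :=
    neighborCount_eq_add (fun w _ => by omega) fun w _ => by omega
  have hunstable := h.unstable v hv
  simp only [heightAt, hsplit]
  rcases lt_trichotomy (b v) k with hlt | heq | hgt
  · have hmono : neighborCount G v (b · < b v) ≤ neighborCount G v (b · < k) :=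
      neighborCount_mono fun w _ hw => hw.trans hlt
    simp only [if_pos hlt, if_pos (Nat.lt_succ_of_lt hlt), if_neg hlt.ne]
    omega
  · simp [heq, add_assoc]
  · simp [hgt.not_gt, hgt.ne', Nat.not_lt.2 (Nat.succ_le_of_lt hgt), add_assoc]

lemma IsBurningTime.ncard_neighborSet_le_heightAt_iff [Finite V] (h : IsBurningTime G s c b)
    (hv : v ≠ s) {k : ℕ} (hk : b v % 2 = k % 2) :
    (G.neighborSet v).ncard ≤ heightAt G c b k v ↔ b v = k := by
  have hstable := h.lt_ncard_neighborSet hv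
  rw [heightAt]
  rcases lt_trichotomy (b v) k with hlt | heq | hgt
  · have hle : neighborCount G v (b · < k) ≤ (G.neighborSet v).ncard :=
      neighborCount_le_ncard_neighborSet
    rw [if_pos hlt]
    omega
  · simpa [← heq] using h.unstable v hv
  · have hbefore := h.stable_before v hv
    have hmono : neighborCount G v (b · < k) ≤ neighborCount G v (b · + 2 < b v) :=
      neighborCount_mono fun w _ hw => by omega
    rw [if_neg hgt.not_gt]
    omega

lemma exists_rank_of_wellFounded [Finite V] {r : V → V → Prop} (hr : WellFounded r) :
    ∃ b : V → ℕ, (∀ u v, r u v → b u < b v) ∧ ∀ v, 0 < b v → ∃ u, r u v ∧ b u + 1 = b v := by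
  cases nonempty_fintype V
  let b : V → ℕ := hr.fix fun v ih => Finset.univ.sup fun u => if h : r u v then ih u h + 1 else 0
  have hb (v) : b v = Finset.univ.sup fun u => if r u v then b u + 1 else 0 := hr.fix_eq _ v
  refine ⟨b, fun u v huv => ?_, fun v hpos => ?_⟩
  · rw [hb v, ← Nat.succ_le_iff]
    exact (if_pos huv).ge.trans
      (Finset.le_sup (f := fun u => if r u v then b u + 1 else 0) (Finset.mem_univ u))
  · obtain ⟨u, -, hu⟩ := Finset.exists_mem_eq_sup Finset.univ ⟨v, Finset.mem_univ v⟩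
      fun u => if r u v then b u + 1 else 0
    rw [← hb v] at hu
    by_cases huv : r u v
    · exact ⟨u, huv, by rw [hu, if_pos huv]⟩
    · rw [if_neg huv] at hu
      omega

/-- The layer of a vertex is the length of the longest directed path that ends in it. -/
lemma exists_isLayering_of_wellFounded [Finite V] (C : G.Coloring Bool) {r : V → V → Prop}
    (hr : WellFounded r) (hadj : ∀ u v, r u v → G.Adj u v) (hsink : ∀ u, ¬r u s)
    (hpred : ∀ v ≠ s, ∃ u, r u v) :
    ∃ b, IsLayering G s b ∧ ∀ u v, r u v → b u < b v := by
  obtain ⟨b, hlt, hrank⟩ := exists_rank_of_wellFounded hr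
  have hs : b s = 0 := by
    by_contra hne
    obtain ⟨u, hu, -⟩ := hrank s (Nat.pos_of_ne_zero hne)
    exact hsink u hu
  have hb (v) (hv : v ≠ s) : ∃ u, G.Adj v u ∧ b u + 1 = b v := by
    obtain ⟨w, hw⟩ := hpred v hv
    obtain ⟨u, huv, hu⟩ := hrank v (Nat.zero_lt_of_lt (hlt w v hw))
    exact ⟨u, (hadj u v huv).symm, hu⟩
  refine ⟨b, ⟨hs, fun u v huv => ?_, hb⟩, hlt⟩
  have hu := mod_two_eq_zero_iff_color_eq C hs hb u
  have hv := mod_two_eq_zero_iff_color_eq C hs hb v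
  rw [color_eq_iff_ne C huv, Ne, ← hv] at hu
  omega

end Layering

namespace Ferrers

variable {n : ℕ} {F : Ferrers n} {a b c : Fin (n + 1) → ℕ} {l : List (Fin (n + 1))}
  {T : Fin (n + 1) → Fin (n + 1) → Bool} {u v : Fin (n + 1)}

/-- The Ferrers graph `G(F)` as a `SimpleGraph`. -/
def graph (F : Ferrers n) : SimpleGraph (Fin (n + 1)) where
  Adj := F.Adj
  symm := ⟨fun _ _ => Or.symm⟩
  loopless := ⟨fun _ h => h.elim (fun h => h.2.1 h.1) fun h => h.2.1 h.1⟩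

/-- The bipartition of `G(F)` into rows (colour `true`) and columns (colour `false`). -/
noncomputable def graphColoring (F : Ferrers n) : F.graph.Coloring Bool :=
  .mk (fun v => decide (v ∈ F.rows)) <| by
    rintro u v (⟨hr, hc, -⟩ | ⟨hr, hc, -⟩) <;> simp [hr, hc]

lemma deg_eq_ncard_neighborSet (v : Fin (n + 1)) : F.deg v = (F.graph.neighborSet v).ncard := rfl

lemma graph_adj_iff_of_mem_rows (hv : v ∈ F.rows) : F.graph.Adj v u ↔ F.Cell v u :=
  or_iff_left fun h => h.2.1 hv

lemma graph_adj_iff_of_notMem_rows (hv : v ∉ F.rows) : F.graph.Adj v u ↔ F.Cell u v :=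
  or_iff_right fun h => hv h.1

lemma neighborCount_graph_of_mem_rows (hv : v ∈ F.rows) (p : Fin (n + 1) → Prop) :
    neighborCount F.graph v p = {j | F.Cell v j ∧ p j}.ncard := by
  simp only [neighborCount, graph_adj_iff_of_mem_rows hv]

lemma neighborCount_graph_of_notMem_rows (hv : v ∉ F.rows) (p : Fin (n + 1) → Prop) :
    neighborCount F.graph v p = {i | F.Cell i v ∧ p i}.ncard := by
  simp only [neighborCount, graph_adj_iff_of_notMem_rows hv]

lemma mem_rows_iff_mod_two_eq_zero (hb : IsLayering F.graph 0 b) (v : Fin (n + 1)) :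
    v ∈ F.rows ↔ b v % 2 = 0 := by
  rw [mod_two_eq_zero_iff_color_eq F.graphColoring hb.sink hb.exists_pred]
  change _ ↔ decide (v ∈ F.rows) = decide (0 ∈ F.rows)
  simp [F.zero_mem]

lemma toppleList_apply (hl : l.Nodup) (hv : v ≠ 0) (hvl : v ∉ l) :
    F.toppleList c l v = c v + neighborCount F.graph v (· ∈ l) := by
  induction l generalizing c with
  | nil => simp [toppleList, neighborCount]
  | cons a l ih =>
    obtain ⟨hal, hl⟩ := List.nodup_cons.1 hl
    obtain ⟨hva, hvl⟩ := List.ne_and_not_mem_of_not_mem_cons hvl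
    have hcount : neighborCount F.graph v (· ∈ a :: l) =
        (if F.graph.Adj v a then 1 else 0) + neighborCount F.graph v (· ∈ l) := by
      rw [← neighborCount_singleton]
      exact neighborCount_eq_add (fun w _ hw => hw ▸ hal) fun w _ => List.mem_cons
    have htopple : F.topple c a v = c v + if F.graph.Adj v a then 1 else 0 := by
      have hcomm : F.Adj a v ↔ F.graph.Adj v a := or_comm
      simp only [topple, hv, hva, hcomm, if_false]
      split_ifs <;> rfl
    rw [toppleList, List.foldl_cons, ← toppleList, ih hl hvl, htopple, hcount, add_assoc]

lemma dharSeq_iff : F.DharSeq c l ↔ l.length = n + 1 ∧ l.Nodup ∧ l.head? = some 0 ∧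
    ∀ v ≠ 0, F.deg v ≤ c v + neighborCount F.graph v (l.idxOf · < l.idxOf v) := by
  refine and_congr_right fun hlen => and_congr_right fun hnodup => and_congr_right fun hhead => ?_
  have hmem (v) : v ∈ l := by
    have huniv : l.toFinset = Finset.univ := by
      rw [← Finset.card_eq_iff_eq_univ, List.toFinset_card_of_nodup hnodup, hlen, Fintype.card_fin]
    exact List.mem_toFinset.1 (huniv ▸ Finset.mem_univ v)
  have hidx {v} : l.idxOf v = 0 ↔ v = 0 := by
    obtain ⟨l', rfl⟩ := List.head?_eq_some_iff.1 hhead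
    rw [← List.idxOf_inj (hmem v), List.idxOf_cons_self]
  have htopple {v} (hv : v ≠ 0) : F.toppleList c (l.take (l.idxOf v)) v =
      c v + neighborCount F.graph v (l.idxOf · < l.idxOf v) := by
    rw [toppleList_apply (hnodup.sublist (List.take_sublist _ _)) hv
      ((List.mem_take_iff_idxOf_lt (hmem v)).not.2 (lt_irrefl _)),
      neighborCount_congr fun w _ => List.mem_take_iff_idxOf_lt (hmem w)]
  refine ⟨fun h v hv => ?_, fun h i hi hpos => ?_⟩
  · have hunstable := h (l.idxOf v) (List.idxOf_lt_length_of_mem (hmem v))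
      (Nat.pos_of_ne_zero (hidx.not.2 hv))
    rwa [List.get_eq_getElem, List.getElem_idxOf, htopple hv] at hunstable
  · have hi_eq : l.idxOf l[i] = i := hnodup.idxOf_getElem i hi
    have hv : l[i] ≠ 0 := hidx.not.1 (by omega)
    have hunstable := h l[i] hv
    rwa [← htopple hv, hi_eq] at hunstable

lemma DharSeq.exists_isBurningSchedule (h : F.DharSeq c l) :
    ∃ b, IsBurningSchedule F.graph 0 c b := by
  obtain ⟨-, -, hhead, hunstable⟩ := dharSeq_iff.1 h
  refine ⟨fun v => 2 * l.idxOf v + if v ∈ F.rows then 0 else 1, ?_, fun u v huv => ?_,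
    fun v hv => (hunstable v hv).trans
      (Nat.add_le_add_left (neighborCount_mono fun w _ hw => ?_) _)⟩
  · obtain ⟨l', rfl⟩ := List.head?_eq_some_iff.1 hhead
    simp [F.zero_mem]
  · rcases huv with ⟨hr, hc, -⟩ | ⟨hr, hc, -⟩ <;> simp only [hr, hc, if_true, if_false] <;> omega
  · split_ifs <;> omega

lemma exists_dharSeq (hzero : b 0 = 0) (hpos : ∀ v ≠ 0, 0 < b v)
    (hunstable : ∀ v ≠ 0, F.deg v ≤ c v + neighborCount F.graph v (b · < b v)) :
    ∃ l, F.DharSeq c l := by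
  have hmono := Tuple.monotone_sort b
  set σ := Tuple.sort b
  have hfirst : σ 0 = 0 := by
    by_contra hne
    have hle : b (σ 0) ≤ b (σ (σ.symm 0)) := hmono (Fin.zero_le _)
    have := hpos _ hne
    rw [σ.apply_symm_apply, hzero] at hle
    omega
  have hnodup : (List.ofFn σ).Nodup := List.nodup_ofFn.2 σ.injective
  have hidx (v) : (List.ofFn σ).idxOf v = σ.symm v := by
    have hlt : (σ.symm v : ℕ) < (List.ofFn σ).length := List.length_ofFn.symm ▸ (σ.symm v).2
    simpa only [List.getElem_ofFn, Fin.eta, σ.apply_symm_apply] using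
      hnodup.idxOf_getElem (σ.symm v) hlt
  refine ⟨List.ofFn σ, dharSeq_iff.2 ⟨List.length_ofFn, hnodup, by simp [hfirst], fun v hv =>
    (hunstable v hv).trans (Nat.add_le_add_left (neighborCount_mono fun w _ hlt => ?_) _)⟩⟩
  rw [hidx, hidx, Fin.val_fin_lt]
  simpa using hmono.reflect_lt (a := σ.symm w) (b := σ.symm v) (by simpa using hlt)

lemma recurrent_iff : F.Recurrent c ↔ c 0 = 0 ∧ ∃ b, IsBurningTime F.graph 0 c b := by
  refine and_congr_right fun _ => ⟨fun ⟨hstable, l, hl⟩ => ?_, fun ⟨b, hb⟩ => ?_⟩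
  · obtain ⟨b, hb⟩ := hl.exists_isBurningSchedule
    exact hb.exists_isBurningTime hstable
  · exact ⟨fun v hv => hb.lt_ncard_neighborSet hv,
      exists_dharSeq hb.sink (fun v hv => hb.isLayering.pos hv) hb.unstable⟩

lemma toppleSet_heightAt (h : IsBurningSchedule F.graph 0 c b) {d : Fin (n + 1) → ℕ} {k : ℕ}
    (hd : ∀ v ≠ 0, d v = heightAt F.graph c b k v) (hv : v ≠ 0) :
    F.toppleSet d {w | b w = k} v = heightAt F.graph c b (k + 1) v := by
  have hcount : {w ∈ {w | b w = k} | F.Adj w v}.ncard = neighborCount F.graph v (b · = k) :=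
    congrArg Set.ncard <| Set.ext fun w => and_comm.trans (and_congr_left fun _ => or_comm)
  rw [h.heightAt_succ hv, toppleSet, if_neg hv, hcount, hd v hv]
  congr

lemma canonAux_eq (h : IsBurningTime F.graph 0 c b) (k : ℕ) :
    (∀ v ≠ 0, F.canonConfig c k v = heightAt F.graph c b k v) ∧
      F.canonTop c k = {v | b v = k} := by
  induction k with
  | zero =>
    refine ⟨fun v _ => by simp [canonConfig, canonAux, heightAt, neighborCount], ?_⟩
    ext v
    refine ⟨fun hv => hv ▸ h.sink, fun hv => ?_⟩
    by_contra hne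
    exact (h.isLayering.pos hne).ne' hv
  | succ k ih =>
    have hheight (v) (hv : v ≠ 0) :
        F.canonConfig c (k + 1) v = heightAt F.graph c b (k + 1) v := by
      change F.toppleSet (F.canonConfig c k) (F.canonTop c k) v = _
      rw [ih.2, toppleSet_heightAt h.toIsBurningSchedule ih.1 hv]
    refine ⟨hheight, Set.ext fun v => ?_⟩
    change v ≠ 0 ∧ (if k % 2 = 0 then v ∉ F.rows else v ∈ F.rows) ∧
      F.deg v ≤ F.canonConfig c (k + 1) v ↔ b v = k + 1
    by_cases hv : v = 0
    · simp [hv, h.sink]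
    have hparity : (if k % 2 = 0 then v ∉ F.rows else v ∈ F.rows) ↔ b v % 2 = (k + 1) % 2 := by
      rw [mem_rows_iff_mod_two_eq_zero h.isLayering]
      split_ifs <;> omega
    rw [hparity, hheight v hv, deg_eq_ncard_neighborSet]
    constructor
    · rintro ⟨-, hk, hle⟩
      exact (h.ncard_neighborSet_le_heightAt_iff hv hk).1 hle
    · intro hk
      have hmod : b v % 2 = (k + 1) % 2 := by rw [hk]
      exact ⟨hv, hmod, (h.ncard_neighborSet_le_heightAt_iff hv hmod).2 hk⟩

lemma canonTop_eq (h : IsBurningTime F.graph 0 c b) (k : ℕ) : F.canonTop c k = {v | b v = k} :=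
  (canonAux_eq h k).2

lemma bIdx_eq (h : IsBurningTime F.graph 0 c b) : F.bIdx c = b := by
  funext v
  have hset : {k | v ∈ F.canonTop c k} = {b v} := by
    ext k
    simp [canonTop_eq h, eq_comm]
  rw [bIdx, hset, csInf_singleton]

lemma minrecFun_eq (h : IsBurningTime F.graph 0 c b) :
    F.minrecFun c = layerMin F.graph 0 b := by
  have hrows := mem_rows_iff_mod_two_eq_zero h.isLayering
  funext v
  simp only [minrecFun, layerMin, bIdx_eq h, canonTop_eq h]
  split_ifs with h0 hv
  · rfl
  · rw [neighborCount_graph_of_mem_rows hv]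
    congr 1 with w
    have hodd : (∃ k, b v < 2 * k + 1 ∧ b w = 2 * k + 1) ↔ w ∉ F.rows ∧ b v < b w := by
      rw [hrows]
      exact ⟨fun ⟨k, _⟩ => by omega, fun _ => ⟨b w / 2, by omega⟩⟩
    simp only [Set.mem_ofPred_eq, Cell, hodd]
    tauto
  · rw [neighborCount_graph_of_notMem_rows hv]
    congr 1 with w
    have heven : (∃ k, b v < 2 * k ∧ b w = 2 * k) ↔ w ∈ F.rows ∧ b v < b w := by
      rw [hrows]
      exact ⟨fun ⟨k, _⟩ => by omega, fun _ => ⟨b w / 2, by omega⟩⟩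
    simp only [Set.mem_ofPred_eq, Cell, heven]
    tauto

/-- The tableau with a `1` in the cells whose row precedes their column in the layering `b`. -/
noncomputable def layerTableau (F : Ferrers n) (b : Fin (n + 1) → ℕ) (i j : Fin (n + 1)) : Bool :=
  decide (F.Cell i j ∧ b i < b j)

lemma phiCT_eq_layerTableau : F.phiCT c = F.layerTableau (F.bIdx c) := by
  ext i j
  simp [phiCT, layerTableau]

lemma layerTableau_eq_true {i j : Fin (n + 1)} (hij : F.Cell i j) :
    F.layerTableau b i j = true ↔ b i < b j := by
  simp [layerTableau, hij]

lemma layerTableau_eq_false (hb : IsLayering F.graph 0 b) {i j : Fin (n + 1)}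
    (hij : F.Cell i j) : F.layerTableau b i j = false ↔ b j < b i := by
  have hparity : b i % 2 ≠ b j % 2 := hb.parity (Or.inl hij)
  rw [← Bool.not_eq_true, layerTableau_eq_true hij]
  omega

lemma isEW_layerTableau (hb : IsLayering F.graph 0 b) : F.IsEW (F.layerTableau b) := by
  refine ⟨fun i j hij => by simp [layerTableau, hij], fun j hj => ?_, fun i hi hi0 => ?_,
    fun i i' j j' hij hij' hi'j hi'j' => ?_⟩
  · rw [layerTableau_eq_true hj, hb.sink]
    exact hb.pos hj.2.2.ne'
  · obtain ⟨j, hj, hlt⟩ := hb.exists_pred i hi0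
    have hij := (graph_adj_iff_of_mem_rows hi).1 hj
    exact ⟨j, hij, (layerTableau_eq_false hb hij).2 (by omega)⟩
  · intro hdiag hanti
    rw [Bool.eq_iff_iff] at hdiag hanti ⊢
    simp only [layerTableau_eq_true, hij, hij', hi'j, hi'j'] at hdiag hanti ⊢
    omega

lemma phiTC_layerTableau (hb : IsLayering F.graph 0 b) :
    F.phiTC (F.layerTableau b) = layerMin F.graph 0 b := by
  funext v
  unfold phiTC layerMin
  split_ifs with h0 hv
  · rfl
  · rw [neighborCount_graph_of_mem_rows hv]
    exact congrArg Set.ncard <| Set.ext fun j => and_congr_right layerTableau_eq_true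
  · rw [neighborCount_graph_of_notMem_rows hv]
    exact congrArg Set.ncard <| Set.ext fun i => and_congr_right (layerTableau_eq_false hb)

lemma suppS_layerTableau (hb : IsLayering F.graph 0 b) (i j : Fin (n + 1)) :
    F.suppS (F.layerTableau b) i j = decide (b i < b j) := by
  simp [suppS, phiTC_layerTableau hb, bIdx_eq hb.isBurningTime_layerMin]

lemma cornersupport_iff_of_lt (hb : IsLayering F.graph 0 b) {i j : Fin (n + 1)}
    (hij : F.Cell i j) (hlt : b i < b j) :
    F.Cornersupport (F.layerTableau b) i j ↔ b i + 1 ≠ b j := by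
  have hrows := mem_rows_iff_mod_two_eq_zero hb
  have hi := (hrows i).1 hij.1
  have hj := (hrows j).not.1 hij.2.1
  rw [← hb.exists_between_iff (Or.inl hij) hlt, Cornersupport, (layerTableau_eq_true hij).2 hlt]
  simp only [suppS_layerTableau hb, hrows, Bool.not_true, decide_eq_true_eq,
    decide_eq_false_iff_not]
  constructor
  · rintro ⟨i', j', _⟩
    exact ⟨j', i', by omega⟩
  · rintro ⟨j', i', _⟩
    exact ⟨i', j', by omega, by omega, by rintro rfl; omega, by rintro rfl; omega, by omega⟩

lemma cornersupport_iff_of_gt (hb : IsLayering F.graph 0 b) {i j : Fin (n + 1)}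
    (hij : F.Cell i j) (hlt : b j < b i) :
    F.Cornersupport (F.layerTableau b) i j ↔ b j + 1 ≠ b i := by
  have hrows := mem_rows_iff_mod_two_eq_zero hb
  have hi := (hrows i).1 hij.1
  have hj := (hrows j).not.1 hij.2.1
  rw [← hb.exists_between_iff (Or.inr hij) hlt, Cornersupport,
    (layerTableau_eq_false hb hij).2 hlt]
  simp only [suppS_layerTableau hb, hrows, Bool.not_false, decide_eq_true_eq,
    decide_eq_false_iff_not]
  constructor
  · rintro ⟨i', j', _⟩
    exact ⟨i', j', by omega⟩
  · rintro ⟨i', j', _⟩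
    exact ⟨i', j', by omega, by omega, by rintro rfl; omega, by rintro rfl; omega, by omega⟩

lemma nu_layerTableau (hb : IsLayering F.graph 0 b) (v : Fin (n + 1)) :
    F.nu (F.layerTableau b) v = neighborCount F.graph v (b · + 1 = b v) := by
  unfold nu
  split_ifs with hv
  · rw [neighborCount_graph_of_mem_rows hv]
    refine congrArg Set.ncard <| Set.ext fun j => and_congr_right fun hj => ?_
    rw [layerTableau_eq_false hb hj, and_congr_right fun hlt =>
      (cornersupport_iff_of_gt hb hj hlt).not]
    omega
  · rw [neighborCount_graph_of_notMem_rows hv]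
    refine congrArg Set.ncard <| Set.ext fun i => and_congr_right fun hi => ?_
    rw [layerTableau_eq_true hi, and_congr_right fun hlt =>
      (cornersupport_iff_of_lt hb hi hlt).not]
    omega

/-- `T` orients the edge between `u` and `v` from `u` to `v`: entries `1` point from the row to the
column, entries `0` from the column to the row. -/
def Points (F : Ferrers n) (T : Fin (n + 1) → Fin (n + 1) → Bool) (u v : Fin (n + 1)) : Prop :=
  (F.Cell u v ∧ T u v = true) ∨ (F.Cell v u ∧ T v u = false)

lemma IsEW.eq_true_of_row_lt (hT : F.IsEW T) {i i' j k : Fin (n + 1)} (hlt : i < i')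
    (hi'j : F.Cell i' j) (hj : T i' j = false) (hij : F.Cell i j) (hi : T i j = true)
    (hi'k : F.Cell i' k) (hk : T i' k = true) : F.Cell i k ∧ T i k = true := by
  have hik : F.Cell i k := ⟨hij.1, hi'k.2.1, hlt.trans hi'k.2.2⟩
  refine ⟨hik, ?_⟩
  by_contra hne
  have hfalse : T i k = false := by simpa using hne
  have := hT.2.2.2 i i' j k hij hik hi'j hi'k (hi.trans hk.symm) (hfalse.trans hj.symm)
  exact hne (this ▸ hi)

/-- The bottom row of `R` can be dropped: it is entered from a column, which is entered from a
higher row of `R`, and that row has a `1` wherever the bottom one has. -/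
lemma IsEW.eq_empty_of_forall_exists (hT : F.IsEW T) (C : Set (Fin (n + 1)))
    (R : Finset (Fin (n + 1))) (hC : ∀ j ∈ C, ∃ i ∈ R, F.Cell i j ∧ T i j = true)
    (hR : ∀ i ∈ R, ∃ j ∈ C, F.Cell i j ∧ T i j = false) : R = ∅ := by
  induction R using Finset.induction_on_max with
  | empty => rfl
  | insert i' R hmax ih =>
    obtain ⟨j, hjC, hi'j, hj⟩ := hR i' (Finset.mem_insert_self i' R)
    obtain ⟨i, hi_insert, hij, hi⟩ := hC j hjC
    have hiR : i ∈ R := Finset.mem_of_mem_insert_of_ne hi_insert (by rintro rfl; simp [hi] at hj)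
    have hempty : R = ∅ := by
      refine ih (fun k hk => ?_) fun r hr => hR r (Finset.mem_insert_of_mem hr)
      obtain ⟨r, hr, hrk, htrue⟩ := hC k hk
      rcases Finset.mem_insert.1 hr with rfl | hr
      · exact ⟨i, hiR, hT.eq_true_of_row_lt (hmax i hiR) hi'j hj hij hi hrk htrue⟩
      · exact ⟨r, hr, hrk, htrue⟩
    simp [hempty] at hiR

lemma IsEW.wellFounded_points (hT : F.IsEW T) : WellFounded (F.Points T) := by
  refine WellFounded.wellFounded_iff_has_min.2 fun S hS => ?_
  by_contra! hpred
  have hC : ∀ j ∈ {j ∈ S | j ∉ F.rows},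
      ∃ i ∈ F.rows.filter (· ∈ S), F.Cell i j ∧ T i j = true := by
    rintro j ⟨hjS, hj⟩
    obtain ⟨i, hiS, hi | hi⟩ := hpred j hjS
    · exact ⟨i, Finset.mem_filter.2 ⟨hi.1.1, hiS⟩, hi⟩
    · exact absurd hi.1.1 hj
  have hR : ∀ i ∈ F.rows.filter (· ∈ S),
      ∃ j ∈ {j ∈ S | j ∉ F.rows}, F.Cell i j ∧ T i j = false := by
    intro i hi
    obtain ⟨hi, hiS⟩ := Finset.mem_filter.1 hi
    obtain ⟨j, hjS, hj | hj⟩ := hpred i hiS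
    · exact absurd hi hj.1.2.1
    · exact ⟨j, ⟨hjS, hj.1.2.1⟩, hj⟩
  have hempty := hT.eq_empty_of_forall_exists _ _ hC hR
  obtain ⟨v, hvS⟩ := hS
  by_cases hv : v ∈ F.rows
  · exact Finset.notMem_empty v (hempty ▸ Finset.mem_filter.2 ⟨hv, hvS⟩)
  · obtain ⟨i, hi, -⟩ := hC v ⟨hvS, hv⟩
    exact Finset.notMem_empty i (hempty ▸ hi)

lemma IsEW.exists_points (hT : F.IsEW T) (hv : v ≠ 0) : ∃ u, F.Points T u v := by
  by_cases hr : v ∈ F.rows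
  · obtain ⟨j, hj⟩ := hT.2.2.1 v hr hv
    exact ⟨j, Or.inr hj⟩
  · have hcell : F.Cell 0 v := ⟨F.zero_mem, hr, Fin.pos_of_ne_zero hv⟩
    exact ⟨0, Or.inl ⟨hcell, hT.2.1 v hcell⟩⟩

lemma IsEW.not_points_zero (hT : F.IsEW T) (u : Fin (n + 1)) : ¬F.Points T u 0 := by
  rintro (⟨hcell, -⟩ | ⟨hcell, hfalse⟩)
  · exact hcell.2.1 F.zero_mem
  · simp [hT.2.1 u hcell] at hfalse

lemma isEW_iff : F.IsEW T ↔ ∃ b, IsLayering F.graph 0 b ∧ F.layerTableau b = T := by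
  refine ⟨fun hT => ?_, fun ⟨b, hb, hbT⟩ => hbT ▸ isEW_layerTableau hb⟩
  obtain ⟨b, hb, hlt⟩ := exists_isLayering_of_wellFounded F.graphColoring hT.wellFounded_points
    (fun u v h => h.imp And.left And.left) hT.not_points_zero fun v => hT.exists_points
  refine ⟨b, hb, funext₂ fun i j => ?_⟩
  by_cases hij : F.Cell i j
  · cases hentry : T i j
    · exact (layerTableau_eq_false hb hij).2 (hlt j i (Or.inr ⟨hij, hentry⟩))
    · exact (layerTableau_eq_true hij).2 (hlt i j (Or.inl ⟨hij, hentry⟩))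
  · simp [layerTableau, hij, hT.1 i j hij]

lemma phiCT_phiTC (hT : F.IsEW T) : F.phiCT (F.phiTC T) = T := by
  obtain ⟨b, hb, rfl⟩ := isEW_iff.1 hT
  rw [phiTC_layerTableau hb, phiCT_eq_layerTableau, bIdx_eq hb.isBurningTime_layerMin]

/-- A decorated EW-tableau `(T, a)`: the decoration satisfies `a_j < ν_j(T)` at the non-sink
vertices and is normalised to `0` at the sink. -/
def IsDecorated (F : Ferrers n) (T : Fin (n + 1) → Fin (n + 1) → Bool) (a : Fin (n + 1) → ℕ) :
    Prop :=
  F.IsEW T ∧ a 0 = 0 ∧ ∀ j, j ≠ 0 → a j < F.nu T j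

lemma isBurningTime_phiTC_add_iff (hb : IsLayering F.graph 0 b) :
    IsBurningTime F.graph 0 (F.phiTC (F.layerTableau b) + a) b ↔
      ∀ j, j ≠ 0 → a j < F.nu (F.layerTableau b) j := by
  simp [isBurningTime_iff, hb, phiTC_layerTableau hb, nu_layerTableau hb]

lemma minrecFun_phiTC_add (h : F.IsDecorated T a) : F.minrecFun (F.phiTC T + a) = F.phiTC T := by
  obtain ⟨hT, -, hlt⟩ := h
  obtain ⟨b, hb, rfl⟩ := isEW_iff.1 hT
  rw [minrecFun_eq ((isBurningTime_phiTC_add_iff hb).2 hlt), phiTC_layerTableau hb]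

lemma recurrent_iff_exists_isDecorated :
    F.Recurrent c ↔ ∃ T a, F.IsDecorated T a ∧ F.phiTC T + a = c := by
  rw [recurrent_iff]
  constructor
  · rintro ⟨hzero, b, h⟩
    have hb := h.isLayering
    have hle : F.phiTC (F.layerTableau b) ≤ c := by
      rw [phiTC_layerTableau hb]
      intro v
      by_cases hv : v = 0
      · simp [layerMin, hv]
      · exact ((isBurningTime_iff.1 h).2 v hv).1
    have hadd := add_tsub_cancel_of_le hle
    refine ⟨F.layerTableau b, c - F.phiTC (F.layerTableau b),
      ⟨isEW_layerTableau hb, by simp [hzero], ?_⟩, hadd⟩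
    rwa [← isBurningTime_phiTC_add_iff hb, hadd]
  · rintro ⟨T, a, ⟨hT, hzero, hlt⟩, rfl⟩
    obtain ⟨b, hb, rfl⟩ := isEW_iff.1 hT
    exact ⟨by simp [phiTC, hzero], b, (isBurningTime_phiTC_add_iff hb).2 hlt⟩

end Ferrers

/-- The map `ψ : x ↦ (φ_CT (minrec x), x - minrec x)` is a
bijection from the recurrent configurations on `G(F)` onto the decorated
EW-tableaux `(T, a)` with `a_j < ν_j(T)` for every non-sink `j`. -/
theorem psi_bijection {n : ℕ} (F : Ferrers n) :
    Set.BijOn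
      (fun c : Fin (n + 1) → ℕ =>
        ((F.phiCT (F.minrecFun c), fun j => c j - F.minrecFun c j) :
          (Fin (n + 1) → Fin (n + 1) → Bool) × (Fin (n + 1) → ℕ)))
      {c | F.Recurrent c}
      {p : (Fin (n + 1) → Fin (n + 1) → Bool) × (Fin (n + 1) → ℕ) |
        F.IsEW p.1 ∧ p.2 0 = 0 ∧ ∀ j : Fin (n + 1), j ≠ 0 → p.2 j < F.nu p.1 j} := by
  have hinv {T a} (h : F.IsDecorated T a) :
      (F.phiCT (F.minrecFun (F.phiTC T + a)),
        fun j => (F.phiTC T + a) j - F.minrecFun (F.phiTC T + a) j) = (T, a) := by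
    simp [Ferrers.minrecFun_phiTC_add h, Ferrers.phiCT_phiTC h.1]
  refine Set.InvOn.bijOn (f' := fun p => F.phiTC p.1 + p.2) ⟨?_, fun p hp => hinv hp⟩ ?_
    fun p hp => Ferrers.recurrent_iff_exists_isDecorated.2 ⟨p.1, p.2, hp, rfl⟩
  · intro c hc
    obtain ⟨T, a, h, rfl⟩ := Ferrers.recurrent_iff_exists_isDecorated.1 hc
    exact congrArg (fun p => F.phiTC p.1 + p.2) (hinv h)
  · intro c hc
    obtain ⟨T, a, h, rfl⟩ := Ferrers.recurrent_iff_exists_isDecorated.1 hc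
    exact Set.mem_of_eq_of_mem (hinv h) h
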